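/- Let Ψ be a mass-stationary random measure on ℝ^d and let f : M(ℝ^d) × ℝ^d × ℝ^d → [0,∞) be a translation-covariant measurable function such that for almost every realization, f(Ψ, 0, ·)·Ψ is a probability measure on ℝ^d (i.e. ∫ f(Ψ, 0, y) dΨ(y) = 1 a.s.). If, conditionally on Ψ, a random point o′ is chosen with law f(Ψ, 0, ·)·Ψ, then for every bounded measurable function F : M(ℝ^d) → ℝ one has E[F(T_{o′}Ψ)] = E[F(Ψ) · ∫ f(Ψ, y, 0) dΨ(y)]; that is, the law of T_{o′}Ψ is the law of Ψ biased by f⁻(0) := ∫ f(Ψ, y, 0) dΨ(y). -/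

import Mathlib

open MeasureTheory ENNReal

noncomputable section

/-- `ℝ^d`. -/
abbrev Vec (d : ℕ) := Fin d → ℝ

/-- The shift `T_t ψ`, defined by `(T_t ψ)(A) = ψ(A + t)`. -/
def shiftM {d : ℕ} (t : Vec d) (ψ : Measure (Vec d)) : Measure (Vec d) :=
  ψ.map (fun x => x - t)

/-- A measure is in `M(ℝ^d)` iff it is finite on bounded sets. -/
def BddFinite {d : ℕ} (ψ : Measure (Vec d)) : Prop :=
  ∀ s : Set (Vec d), Bornology.IsBounded s → ψ s < ⊤

/-- Translation covariance of `g : M(ℝ^d) × ℝ^d × ℝ^d → [0,∞]`. -/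
def Covariant3 {d : ℕ} (g : Measure (Vec d) → Vec d → Vec d → ℝ≥0∞) : Prop :=
  ∀ (t x y : Vec d) (ψ : Measure (Vec d)), g (shiftM t ψ) (x - t) (y - t) = g ψ x y

/-- A random measure `Ψ` on a probability space `(Ω, P)` is mass-stationary if the mass
transport principle holds for every translation-covariant measurable `g`. -/
def MassStationary {d : ℕ} {Ω : Type*} [MeasurableSpace Ω] (P : Measure Ω)
    (Ψ : Ω → Measure (Vec d)) : Prop :=
  ∀ g : Measure (Vec d) → Vec d → Vec d → ℝ≥0∞,
    Measurable (fun p : Measure (Vec d) × Vec d × Vec d => g p.1 p.2.1 p.2.2) →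
    Covariant3 g →
    ∫⁻ ω, (∫⁻ y, g (Ψ ω) 0 y ∂(Ψ ω)) ∂P = ∫⁻ ω, (∫⁻ y, g (Ψ ω) y 0 ∂(Ψ ω)) ∂P

/-!
Mass transport, applied to `g ψ x y = f ψ x y * G (T_y ψ)`, says that the law of `T_{o′} Ψ` is the
image under `Ψ` of the base measure with density `f⁻(0)`; both expectations are the integral of `F`
against this law.

For `d > 0` the map `(ψ, y) ↦ T_y ψ` is not jointly measurable on all Borel measures: take for `ψ`
the counting measure of a non-Borel set. Hence `ψ` enters `g` through an s-finite kernel that is `ψ`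
itself on boundedly finite measures and `0` elsewhere.
-/

open ProbabilityTheory

section SFiniteKernel

variable {α β : Type*} [MeasurableSpace α] [MeasurableSpace β]

-- Finite masses need not be bounded in `a`, so `α` is cut into the sets where `⌊κ a univ⌋₊ = n`.
lemma isSFiniteKernel_of_isFiniteMeasure (κ : Kernel α β) [∀ a, IsFiniteMeasure (κ a)] :
    IsSFiniteKernel κ := by
  classical
  let massFloor : α → ℕ := fun a => ⌊(κ a Set.univ).toReal⌋₊
  have massFloor_measurable : Measurable massFloor :=
    (κ.measurable_coe .univ).ennreal_toReal.nat_floor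
  let piece : ℕ → Kernel α β := fun n =>
    Kernel.piecewise (massFloor_measurable (measurableSet_singleton n)) κ 0
  have piece_finite (n : ℕ) : IsFiniteKernel (piece n) := by
    refine ⟨⟨ENNReal.ofReal (n + 1), ENNReal.ofReal_lt_top, fun a => ?_⟩⟩
    by_cases ha : massFloor a = n
    · have mass_le : (κ a Set.univ).toReal ≤ n + 1 := ha ▸ (Nat.lt_floor_add_one _).le
      simpa [piece, Kernel.piecewise_apply, ha] using
        (ENNReal.le_ofReal_iff_toReal_le (measure_ne_top _ _) (by positivity)).2 mass_le
    · simp [piece, Kernel.piecewise_apply, ha]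
  have sum_piece : Kernel.sum piece = κ := by
    ext a s hs
    rw [Kernel.sum_apply' _ _ hs, tsum_eq_single (massFloor a)]
    · simp [piece, Kernel.piecewise_apply]
    · intro n hn
      simp [piece, Kernel.piecewise_apply, hn.symm]
  exact sum_piece ▸ Kernel.isSFiniteKernel_sum

lemma isSFiniteKernel_of_iUnion_eq_univ (κ : Kernel α β) {S : ℕ → Set β}
    (hS : ∀ n, MeasurableSet (S n)) (hcover : ⋃ n, S n = Set.univ)
    (hfin : ∀ a n, κ a (S n) < ∞) : IsSFiniteKernel κ := by
  have disjointed_measurable := MeasurableSet.disjointed hS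
  have sum_restrict : Kernel.sum (fun n => κ.restrict (disjointed_measurable n)) = κ := by
    ext1 a
    simp only [Kernel.sum_apply, Kernel.restrict_apply]
    rw [← Measure.restrict_iUnion (disjoint_disjointed S) disjointed_measurable,
      iUnion_disjointed, hcover, Measure.restrict_univ]
  have restrict_sfinite (n : ℕ) : IsSFiniteKernel (κ.restrict (disjointed_measurable n)) := by
    have (a : α) : IsFiniteMeasure (κ.restrict (disjointed_measurable n) a) := by
      rw [Kernel.restrict_apply, isFiniteMeasure_restrict]
      exact ((measure_mono (disjointed_subset S n)).trans_lt (hfin a n)).ne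
    exact isSFiniteKernel_of_isFiniteMeasure _
  exact sum_restrict ▸ Kernel.isSFiniteKernel_sum

-- `∞ = ∑ n, 1` reduces the set where the density is infinite to finite densities.
lemma isSFiniteKernel_withDensity (κ : Kernel α β) [IsSFiniteKernel κ] (f : α → β → ℝ≥0∞) :
    IsSFiniteKernel (κ.withDensity f) := by
  classical
  by_cases hf : Measurable (Function.uncurry f)
  swap
  · rw [Kernel.withDensity_of_not_measurable _ hf]
    infer_instance
  let summand : ℕ → α → β → ℝ≥0∞ := fun n a b =>
    if f a b = ∞ then 1 else if n = 0 then f a b else 0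
  have summand_measurable (n : ℕ) : Measurable (Function.uncurry (summand n)) :=
    .ite (hf (measurableSet_singleton ∞)) measurable_const (.ite (.const _) hf measurable_const)
  have summand_ne_top (n : ℕ) (a : α) (b : β) : summand n a b ≠ ∞ := by
    dsimp only [summand]
    split_ifs <;> simp_all
  have tsum_summand : ∑' n, summand n = f := by
    ext a b
    rw [tsum_apply (Pi.summable.2 fun _ => Pi.summable.2 fun _ => ENNReal.summable),
      tsum_apply (Pi.summable.2 fun _ => ENNReal.summable)]
    by_cases hab : f a b = ∞
    · simp [summand, hab]
    · simp [summand, hab]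
  have summand_sfinite (n : ℕ) : IsSFiniteKernel (κ.withDensity (summand n)) :=
    Kernel.IsSFiniteKernel.withDensity κ (summand_ne_top n)
  rw [← tsum_summand, Kernel.withDensity_tsum κ summand_measurable]
  exact Kernel.isSFiniteKernel_sum

end SFiniteKernel

section Shift

variable {d : ℕ}

lemma shiftM_zero (ψ : Measure (Vec d)) : shiftM 0 ψ = ψ := by
  simp [shiftM]

lemma shiftM_apply (t : Vec d) (ψ : Measure (Vec d)) (s : Set (Vec d)) :
    shiftM t ψ s = ψ ((· - t) ⁻¹' s) :=
  (MeasurableEquiv.subRight t).map_apply s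

lemma shiftM_shiftM (s t : Vec d) (ψ : Measure (Vec d)) :
    shiftM s (shiftM t ψ) = shiftM (s + t) ψ := by
  ext A
  simp only [shiftM_apply, Set.preimage_preimage, sub_sub, add_comm t]

lemma shiftM_sub_shiftM (t y : Vec d) (ψ : Measure (Vec d)) :
    shiftM (y - t) (shiftM t ψ) = shiftM y ψ := by
  rw [shiftM_shiftM, sub_add_cancel]

lemma measurable_shiftM_kernel {α : Type*} [MeasurableSpace α] (κ : Kernel α (Vec d))
    [IsSFiniteKernel κ] : Measurable fun p : α × Vec d => shiftM p.2 (κ p.1) := by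
  refine Measure.measurable_of_measurable_coe _ fun A hA => ?_
  simp only [shiftM_apply]
  exact Kernel.measurable_kernel_prodMk_left (κ := κ.prodMkRight (Vec d))
    (measurableSet_preimage (f := fun q : (α × Vec d) × Vec d => q.2 - q.1.2) (by fun_prop) hA)

lemma BddFinite.shiftM {ψ : Measure (Vec d)} (h : BddFinite ψ) (t : Vec d) :
    BddFinite (shiftM t ψ) := fun s hs => by
  rw [shiftM_apply]
  exact h _ ((IsometryEquiv.subRight t).isometry.antilipschitz.isBounded_preimage hs)

lemma bddFinite_shiftM_iff {t : Vec d} {ψ : Measure (Vec d)} :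
    BddFinite (shiftM t ψ) ↔ BddFinite ψ := by
  refine ⟨fun h => ?_, fun h => h.shiftM t⟩
  simpa only [shiftM_shiftM, neg_add_cancel, shiftM_zero] using h.shiftM (-t)

end Shift

section BddFinite

variable {d : ℕ}

lemma bddFinite_iff_ball_nat {ψ : Measure (Vec d)} :
    BddFinite ψ ↔ ∀ n : ℕ, ψ (Metric.ball 0 n) < ∞ := by
  refine ⟨fun h n => h _ Metric.isBounded_ball, fun h s hs => ?_⟩
  obtain ⟨r, hr⟩ := hs.subset_ball 0
  obtain ⟨n, hn⟩ := exists_nat_ge r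
  exact (measure_mono (hr.trans (Metric.ball_subset_ball hn))).trans_lt (h n)

lemma measurableSet_bddFinite : MeasurableSet {ψ : Measure (Vec d) | BddFinite ψ} := by
  simp only [bddFinite_iff_ball_nat, Set.ofPred_forall]
  exact MeasurableSet.iInter fun n =>
    measurableSet_lt (Measure.measurable_coe measurableSet_ball) measurable_const

/-- The tautological kernel `ψ ↦ ψ` on `M(ℝ^d)`, extended by `0` to all measures so that it is
s-finite. -/
def bddFiniteKernel (d : ℕ) : Kernel (Measure (Vec d)) (Vec d) where
  toFun := {ψ | BddFinite ψ}.indicator id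
  measurable' := measurable_id.indicator measurableSet_bddFinite

lemma bddFiniteKernel_apply {ψ : Measure (Vec d)} (h : BddFinite ψ) : bddFiniteKernel d ψ = ψ :=
  Set.indicator_of_mem h id

lemma bddFiniteKernel_apply_of_not {ψ : Measure (Vec d)} (h : ¬BddFinite ψ) :
    bddFiniteKernel d ψ = 0 :=
  Set.indicator_of_notMem h id

instance : IsSFiniteKernel (bddFiniteKernel d) := by
  refine isSFiniteKernel_of_iUnion_eq_univ _ (fun _ => measurableSet_ball)
    (Metric.iUnion_ball_nat (0 : Vec d)) fun ψ n => ?_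
  by_cases h : BddFinite ψ
  · rw [bddFiniteKernel_apply h]
    exact h _ Metric.isBounded_ball
  · simp [bddFiniteKernel_apply_of_not h]

lemma bddFiniteKernel_shiftM (t : Vec d) (ψ : Measure (Vec d)) :
    bddFiniteKernel d (shiftM t ψ) = shiftM t (bddFiniteKernel d ψ) := by
  by_cases h : BddFinite ψ
  · rw [bddFiniteKernel_apply h, bddFiniteKernel_apply (h.shiftM t)]
  · rw [bddFiniteKernel_apply_of_not h,
      bddFiniteKernel_apply_of_not (mt bddFinite_shiftM_iff.1 h)]
    simp [shiftM]

end BddFinite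

section Rerooting

variable {d : ℕ} {Ω : Type*} {Ψ : Ω → Measure (Vec d)}

/-- The rerooted measure `T_y (Ψ ω)`. It is `0` where `Ψ` is not boundedly finite, which makes it
jointly measurable in `(ω, y)`. -/
def reroot (Ψ : Ω → Measure (Vec d)) (p : Ω × Vec d) : Measure (Vec d) :=
  shiftM p.2 (bddFiniteKernel d (Ψ p.1))

lemma reroot_apply {ω : Ω} (hω : BddFinite (Ψ ω)) (y : Vec d) :
    reroot Ψ (ω, y) = shiftM y (Ψ ω) := by
  rw [reroot, bddFiniteKernel_apply hω]

variable [MeasurableSpace Ω] {P : Measure Ω} {f : Measure (Vec d) → Vec d → Vec d → ℝ≥0∞}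

lemma measurable_reroot (hΨ : Measurable Ψ) : Measurable (reroot Ψ) :=
  measurable_shiftM_kernel ((bddFiniteKernel d).comap Ψ hΨ)

/-- The mass `f⁻(0)` received by the origin when `f` transports mass within `ψ`. -/
def inflow (f : Measure (Vec d) → Vec d → Vec d → ℝ≥0∞) (ψ : Measure (Vec d)) : ℝ≥0∞ :=
  ∫⁻ y, f ψ y 0 ∂ψ

/-- The conditional law `f(Ψ, 0, ·)·Ψ` of the new root `o′`, as a kernel on the probability space.
It is `0` where `Ψ` is not boundedly finite, and everywhere if `f` is not measurable. -/
def newRootKernel (hΨ : Measurable Ψ) (f : Measure (Vec d) → Vec d → Vec d → ℝ≥0∞) :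
    Kernel Ω (Vec d) :=
  ((bddFiniteKernel d).comap Ψ hΨ).withDensity fun ω y => f (Ψ ω) 0 y

instance (hΨ : Measurable Ψ) : IsSFiniteKernel (newRootKernel hΨ f) :=
  isSFiniteKernel_withDensity _ _

lemma newRootKernel_apply (hΨ : Measurable Ψ)
    (hf : Measurable fun p : Measure (Vec d) × Vec d × Vec d => f p.1 p.2.1 p.2.2) {ω : Ω}
    (hω : BddFinite (Ψ ω)) :
    newRootKernel hΨ f ω = (Ψ ω).withDensity fun y => f (Ψ ω) 0 y := by
  have hf_root : Measurable (Function.uncurry fun (ω : Ω) (y : Vec d) => f (Ψ ω) 0 y) :=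
    hf.comp (f := fun p : Ω × Vec d => (Ψ p.1, (0 : Vec d), p.2)) (by fun_prop)
  rw [newRootKernel, Kernel.withDensity_apply _ hf_root, Kernel.comap_apply,
    bddFiniteKernel_apply hω]

lemma aemeasurable_inflow (hΨ : Measurable Ψ) (hbf : ∀ᵐ ω ∂P, BddFinite (Ψ ω))
    (hf : Measurable fun p : Measure (Vec d) × Vec d × Vec d => f p.1 p.2.1 p.2.2) :
    AEMeasurable (fun ω => inflow f (Ψ ω)) P := by
  have hf_origin : Measurable fun p : Measure (Vec d) × Vec d => f p.1 p.2 0 :=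
    hf.comp (f := fun p : Measure (Vec d) × Vec d => (p.1, p.2, (0 : Vec d))) (by fun_prop)
  refine ⟨_, (hf_origin.lintegral_kernel_prod_right' (κ := bddFiniteKernel d)).comp hΨ, ?_⟩
  filter_upwards [hbf] with ω hω
  simp only [Function.comp_apply, bddFiniteKernel_apply hω, inflow]

lemma MassStationary.lintegral_shiftM (hms : MassStationary P Ψ)
    (hbf : ∀ᵐ ω ∂P, BddFinite (Ψ ω))
    (hf : Measurable fun p : Measure (Vec d) × Vec d × Vec d => f p.1 p.2.1 p.2.2)
    (hcov : Covariant3 f) {G : Measure (Vec d) → ℝ≥0∞} (hG : Measurable G) :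
    ∫⁻ ω, ∫⁻ y, f (Ψ ω) 0 y * G (shiftM y (Ψ ω)) ∂(Ψ ω) ∂P
      = ∫⁻ ω, inflow f (Ψ ω) * G (Ψ ω) ∂P := by
  let g : Measure (Vec d) → Vec d → Vec d → ℝ≥0∞ := fun ψ x y =>
    f ψ x y * G (shiftM y (bddFiniteKernel d ψ))
  have g_measurable : Measurable fun p : Measure (Vec d) × Vec d × Vec d => g p.1 p.2.1 p.2.2 :=
    hf.mul (hG.comp ((measurable_shiftM_kernel (bddFiniteKernel d)).comp
      (measurable_fst.prodMk measurable_snd.snd)))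
  have g_covariant : Covariant3 g := fun t x y ψ => by
    simp only [g, hcov t x y ψ, bddFiniteKernel_shiftM, shiftM_sub_shiftM]
  calc ∫⁻ ω, ∫⁻ y, f (Ψ ω) 0 y * G (shiftM y (Ψ ω)) ∂(Ψ ω) ∂P
      = ∫⁻ ω, ∫⁻ y, g (Ψ ω) 0 y ∂(Ψ ω) ∂P := by
        refine lintegral_congr_ae ?_
        filter_upwards [hbf] with ω hω
        simp only [g, bddFiniteKernel_apply hω]
    _ = ∫⁻ ω, ∫⁻ y, g (Ψ ω) y 0 ∂(Ψ ω) ∂P := hms g g_measurable g_covariant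
    _ = ∫⁻ ω, inflow f (Ψ ω) * G (Ψ ω) ∂P := by
        refine lintegral_congr_ae ?_
        filter_upwards [hbf] with ω hω
        simp only [g, bddFiniteKernel_apply hω, shiftM_zero, inflow]
        exact lintegral_mul_const _
          (hf.comp (f := fun y : Vec d => (Ψ ω, y, (0 : Vec d))) (by fun_prop))

theorem MassStationary.map_reroot_compProd_newRootKernel [SFinite P] (hms : MassStationary P Ψ)
    (hΨ : Measurable Ψ) (hbf : ∀ᵐ ω ∂P, BddFinite (Ψ ω))
    (hf : Measurable fun p : Measure (Vec d) × Vec d × Vec d => f p.1 p.2.1 p.2.2)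
    (hcov : Covariant3 f) :
    (P ⊗ₘ newRootKernel hΨ f).map (reroot Ψ)
      = (P.withDensity fun ω => inflow f (Ψ ω)).map Ψ := by
  refine Measure.ext_of_lintegral _ fun G hG => ?_
  have G_reroot_measurable : Measurable fun p => G (reroot Ψ p) := hG.comp (measurable_reroot hΨ)
  calc ∫⁻ ψ, G ψ ∂((P ⊗ₘ newRootKernel hΨ f).map (reroot Ψ))
      = ∫⁻ ω, ∫⁻ y, G (reroot Ψ (ω, y)) ∂(newRootKernel hΨ f ω) ∂P := by
        rw [lintegral_map hG (measurable_reroot hΨ),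
          Measure.lintegral_compProd G_reroot_measurable]
    _ = ∫⁻ ω, ∫⁻ y, f (Ψ ω) 0 y * G (shiftM y (Ψ ω)) ∂(Ψ ω) ∂P := by
        refine lintegral_congr_ae ?_
        filter_upwards [hbf] with ω hω
        have density_measurable : Measurable fun y => f (Ψ ω) 0 y :=
          hf.comp (f := fun y : Vec d => (Ψ ω, (0 : Vec d), y)) (by fun_prop)
        have G_reroot_section_measurable : Measurable fun y => G (reroot Ψ (ω, y)) :=
          G_reroot_measurable.comp measurable_prodMk_left
        rw [newRootKernel_apply hΨ hf hω, lintegral_withDensity_eq_lintegral_mul _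
          density_measurable G_reroot_section_measurable]
        simp only [Pi.mul_apply, reroot_apply hω]
    _ = ∫⁻ ω, inflow f (Ψ ω) * G (Ψ ω) ∂P := hms.lintegral_shiftM hbf hf hcov hG
    _ = ∫⁻ ω, G (Ψ ω) ∂(P.withDensity fun ω => inflow f (Ψ ω)) :=
        (lintegral_withDensity_eq_lintegral_mul₀ (aemeasurable_inflow hΨ hbf hf)
          (hG.comp hΨ).aemeasurable).symm
    _ = ∫⁻ ψ, G ψ ∂((P.withDensity fun ω => inflow f (Ψ ω)).map Ψ) :=
        (lintegral_map hG hΨ).symm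

lemma MassStationary.lintegral_inflow_ne_top (hms : MassStationary P Ψ)
    (hf : Measurable fun p : Measure (Vec d) × Vec d × Vec d => f p.1 p.2.1 p.2.2)
    (hcov : Covariant3 f) (hout : ∫⁻ ω, ∫⁻ y, f (Ψ ω) 0 y ∂(Ψ ω) ∂P ≠ ∞) :
    ∫⁻ ω, inflow f (Ψ ω) ∂P ≠ ∞ :=
  hms f hf hcov ▸ hout

lemma integrable_toReal_inflow_smul {E : Type*} [NormedAddCommGroup E] [NormedSpace ℝ E]
    (hΨ : Measurable Ψ) (hbf : ∀ᵐ ω ∂P, BddFinite (Ψ ω))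
    (hf : Measurable fun p : Measure (Vec d) × Vec d × Vec d => f p.1 p.2.1 p.2.2)
    (hinflow : ∫⁻ ω, inflow f (Ψ ω) ∂P ≠ ∞) {F : Measure (Vec d) → E}
    (hF : StronglyMeasurable F) {C : ℝ} (hC : ∀ ψ, ‖F ψ‖ ≤ C) :
    Integrable (fun ω => (inflow f (Ψ ω)).toReal • F (Ψ ω)) P :=
  (integrable_toReal_of_lintegral_ne_top (aemeasurable_inflow hΨ hbf hf) hinflow).smul_bdd C
    (hF.comp_measurable hΨ).aestronglyMeasurable (.of_forall fun ω => hC (Ψ ω))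

theorem stmt10_general {E : Type*} [NormedAddCommGroup E] [NormedSpace ℝ E] [SFinite P]
    (hΨ : Measurable Ψ) (hbf : ∀ᵐ ω ∂P, BddFinite (Ψ ω)) (hms : MassStationary P Ψ)
    (hf : Measurable fun p : Measure (Vec d) × Vec d × Vec d => f p.1 p.2.1 p.2.2)
    (hcov : Covariant3 f) (hinflow : ∀ᵐ ω ∂P, inflow f (Ψ ω) < ∞)
    {F : Measure (Vec d) → E} (hF : StronglyMeasurable F)
    (hint : Integrable (fun ω => (inflow f (Ψ ω)).toReal • F (Ψ ω)) P) :
    ∫ ω, ∫ y, F (shiftM y (Ψ ω)) ∂((Ψ ω).withDensity fun y => f (Ψ ω) 0 y) ∂P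
      = ∫ ω, (inflow f (Ψ ω)).toReal • F (Ψ ω) ∂P := by
  have reroot_aemeasurable := (measurable_reroot hΨ).aemeasurable (μ := P ⊗ₘ newRootKernel hΨ f)
  have inflow_aemeasurable := aemeasurable_inflow hΨ hbf hf
  have law_eq := hms.map_reroot_compProd_newRootKernel hΨ hbf hf hcov
  have integrable_reroot : Integrable (fun p => F (reroot Ψ p)) (P ⊗ₘ newRootKernel hΨ f) := by
    refine (integrable_map_measure hF.aestronglyMeasurable reroot_aemeasurable).1 ?_
    rw [law_eq, integrable_map_measure hF.aestronglyMeasurable hΨ.aemeasurable]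
    exact (integrable_withDensity_iff_integrable_smul₀' inflow_aemeasurable hinflow).2 hint
  calc ∫ ω, ∫ y, F (shiftM y (Ψ ω)) ∂((Ψ ω).withDensity fun y => f (Ψ ω) 0 y) ∂P
      = ∫ ω, ∫ y, F (reroot Ψ (ω, y)) ∂(newRootKernel hΨ f ω) ∂P := by
        refine integral_congr_ae ?_
        filter_upwards [hbf] with ω hω
        simp only [newRootKernel_apply hΨ hf hω, reroot_apply hω]
    _ = ∫ p, F (reroot Ψ p) ∂(P ⊗ₘ newRootKernel hΨ f) :=
        (Measure.integral_compProd integrable_reroot).symm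
    _ = ∫ ψ, F ψ ∂((P ⊗ₘ newRootKernel hΨ f).map (reroot Ψ)) :=
        (integral_map reroot_aemeasurable hF.aestronglyMeasurable).symm
    _ = ∫ ω, F (Ψ ω) ∂(P.withDensity fun ω => inflow f (Ψ ω)) := by
        rw [law_eq, integral_map hΨ.aemeasurable hF.aestronglyMeasurable]
    _ = ∫ ω, (inflow f (Ψ ω)).toReal • F (Ψ ω) ∂P :=
        integral_withDensity_eq_integral_toReal_smul₀ inflow_aemeasurable hinflow _

end Rerooting

/-- Let `Ψ` be a mass-stationary random measure on `ℝ^d` and let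
`f : M(ℝ^d) × ℝ^d × ℝ^d → [0,∞)` be translation-covariant and measurable with
`∫ f Ψ 0 y dΨ y = 1` a.s.  If, conditionally on `Ψ`, a new root `o′` is chosen with law
`f Ψ 0 · dΨ`, then for every bounded measurable `F : M(ℝ^d) → ℝ`,
`E[F (T_{o′} Ψ)] = E[F Ψ · f⁻(0)]` where `f⁻(0) = ∫ f Ψ y 0 dΨ y`; i.e. the law of
`T_{o′} Ψ` is the law of `Ψ` biased by `f⁻(0)`. -/
theorem stmt10 {d : ℕ} {Ω : Type*} [MeasurableSpace Ω] (P : Measure Ω) [IsProbabilityMeasure P]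
    (Ψ : Ω → Measure (Vec d)) (hΨm : Measurable Ψ)
    (hbf : ∀ᵐ ω ∂P, BddFinite (Ψ ω))
    (hms : MassStationary P Ψ)
    (f : Measure (Vec d) → Vec d → Vec d → ℝ≥0∞)
    (hfm : Measurable (fun p : Measure (Vec d) × Vec d × Vec d => f p.1 p.2.1 p.2.2))
    (hffin : ∀ (ψ : Measure (Vec d)) (x y : Vec d), f ψ x y < ⊤)
    (hfcov : Covariant3 f)
    (hprob : ∀ᵐ ω ∂P, (∫⁻ y, f (Ψ ω) 0 y ∂(Ψ ω)) = 1)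
    (F : Measure (Vec d) → ℝ) (hFm : Measurable F) (hFb : ∃ C : ℝ, ∀ ψ, |F ψ| ≤ C) :
    ∫ ω, (∫ y, F (shiftM y (Ψ ω)) ∂((Ψ ω).withDensity (fun y => f (Ψ ω) 0 y))) ∂P
      = ∫ ω, F (Ψ ω) * (∫⁻ y, f (Ψ ω) y 0 ∂(Ψ ω)).toReal ∂P := by
  obtain ⟨C, hC⟩ := hFb
  have inflow_ne_top : ∫⁻ ω, inflow f (Ψ ω) ∂P ≠ ∞ :=
    hms.lintegral_inflow_ne_top hfm hfcov (by simp [lintegral_congr_ae hprob])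
  simpa only [smul_eq_mul, mul_comm, inflow] using
    stmt10_general hΨm hbf hms hfm hfcov
      (ae_lt_top' (aemeasurable_inflow hΨm hbf hfm) inflow_ne_top) hFm.stronglyMeasurable
      (integrable_toReal_inflow_smul hΨm hbf hfm inflow_ne_top hFm.stronglyMeasurable hC)
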